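/- arXiv:2402.13491 — 2 statements merged into one kernel-verified Lean document; each statement's English description precedes it below -/
import Mathlib

section
/- Let n be a finite type, A G K : Matrix n n ℂ with G and K positive semidefinite, and set M = Matrix.fromBlocks A G K (-Aᴴ). Suppose λ ∈ ℂ with Re λ = 0 and x y : n → ℂ satisfy M *ᵥ (Sum.elim x y) = λ • (Sum.elim x y). Then A *ᵥ x = λ • x and Aᴴ *ᵥ y = (-λ) • y. -/
open Matrix
open scoped ComplexOrder

/-!
Pair the second block row with `x` and the first, conjugated, with `y`. Since
`xᴴ Aᴴ y = (A x)ᴴ y`, the terms in `A` cancel and `xᴴ K x + yᴴ G y = 2 Re(λ) xᴴ y`. When the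
right-hand side has nonpositive real part, in particular when `Re λ = 0`, semidefiniteness forces
`K x = 0` and `G y = 0`, so the two block rows decouple.
-/

section Algebra

variable {m n R : Type*} [Fintype m] [Fintype n]

theorem fromBlocks_mulVec_sumElim_eq_smul_iff [NonUnitalNonAssocSemiring R]
    (A : Matrix m m R) (B : Matrix m n R) (C : Matrix n m R) (D : Matrix n n R)
    (c : R) (x : m → R) (y : n → R) :
    fromBlocks A B C D *ᵥ Sum.elim x y = c • Sum.elim x y ↔
      A *ᵥ x + B *ᵥ y = c • x ∧ C *ᵥ x + D *ᵥ y = c • y := by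
  have smul_sumElim : c • Sum.elim x y = Sum.elim (c • x) (c • y) := Sum.comp_elim (c • ·) x y
  rw [fromBlocks_mulVec, smul_sumElim, Sum.elim_eq_iff, Sum.elim_comp_inl, Sum.elim_comp_inr]

theorem star_mulVec_dotProduct [NonUnitalSemiring R] [StarRing R]
    (A : Matrix m n R) (x : n → R) (y : m → R) :
    star (A *ᵥ x) ⬝ᵥ y = star x ⬝ᵥ (Aᴴ *ᵥ y) := by
  rw [star_mulVec, ← dotProduct_mulVec]

theorem quadraticForm_add_eq_of_hamiltonian_eigen [CommRing R] [StarRing R]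
    {A G K : Matrix n n R} (hG : G.IsHermitian) {lam : R} {x y : n → R}
    (h : fromBlocks A G K (-Aᴴ) *ᵥ Sum.elim x y = lam • Sum.elim x y) :
    star x ⬝ᵥ (K *ᵥ x) + star y ⬝ᵥ (G *ᵥ y) = (lam + star lam) * (star x ⬝ᵥ y) := by
  obtain ⟨hx, hy⟩ := (fromBlocks_mulVec_sumElim_eq_smul_iff ..).1 h
  have row_x : star x ⬝ᵥ (Aᴴ *ᵥ y) + star y ⬝ᵥ (G *ᵥ y) = star lam * (star x ⬝ᵥ y) := by
    calc star x ⬝ᵥ (Aᴴ *ᵥ y) + star y ⬝ᵥ (G *ᵥ y)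
        = star (A *ᵥ x + G *ᵥ y) ⬝ᵥ y := by
          rw [star_add, add_dotProduct, star_mulVec_dotProduct, star_mulVec_dotProduct, hG.eq]
      _ = star lam * (star x ⬝ᵥ y) := by rw [hx, star_smul, smul_dotProduct, smul_eq_mul]
  have row_y : star x ⬝ᵥ (K *ᵥ x) - star x ⬝ᵥ (Aᴴ *ᵥ y) = lam * (star x ⬝ᵥ y) := by
    calc star x ⬝ᵥ (K *ᵥ x) - star x ⬝ᵥ (Aᴴ *ᵥ y)
        = star x ⬝ᵥ (K *ᵥ x + (-Aᴴ) *ᵥ y) := by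
          rw [neg_mulVec, ← sub_eq_add_neg, dotProduct_sub]
      _ = lam * (star x ⬝ᵥ y) := by rw [hy, dotProduct_smul, smul_eq_mul]
  linear_combination row_x + row_y

end Algebra

section Semidefinite

variable {m n 𝕜 : Type*} [Fintype m] [Fintype n] [RCLike 𝕜]

theorem mulVec_eq_zero_of_re_quadraticForm_add_nonpos {K : Matrix m m 𝕜} {G : Matrix n n 𝕜}
    (hK : K.PosSemidef) (hG : G.PosSemidef) {x : m → 𝕜} {y : n → 𝕜}
    (h : RCLike.re (star x ⬝ᵥ (K *ᵥ x) + star y ⬝ᵥ (G *ᵥ y)) ≤ 0) :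
    K *ᵥ x = 0 ∧ G *ᵥ y = 0 := by
  have hKx := hK.dotProduct_mulVec_nonneg x
  have hGy := hG.dotProduct_mulVec_nonneg y
  have sum_nonneg := add_nonneg hKx hGy
  have sum_eq_zero := le_antisymm
    (RCLike.nonpos_iff.2 ⟨h, (RCLike.nonneg_iff.1 sum_nonneg).2⟩) sum_nonneg
  rwa [add_eq_zero_iff_of_nonneg hKx hGy, hK.dotProduct_mulVec_zero_iff,
    hG.dotProduct_mulVec_zero_iff] at sum_eq_zero

variable {A G K : Matrix n n 𝕜} {lam : 𝕜} {x y : n → 𝕜}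

theorem mulVec_eq_zero_of_hamiltonian_eigen (hG : G.PosSemidef) (hK : K.PosSemidef)
    (hlam : RCLike.re lam * RCLike.re (star x ⬝ᵥ y) ≤ 0)
    (h : fromBlocks A G K (-Aᴴ) *ᵥ Sum.elim x y = lam • Sum.elim x y) :
    K *ᵥ x = 0 ∧ G *ᵥ y = 0 := by
  refine mulVec_eq_zero_of_re_quadraticForm_add_nonpos hK hG ?_
  calc RCLike.re (star x ⬝ᵥ (K *ᵥ x) + star y ⬝ᵥ (G *ᵥ y))
      = RCLike.re ((lam + star lam) * (star x ⬝ᵥ y)) := by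
        rw [quadraticForm_add_eq_of_hamiltonian_eigen hG.isHermitian h]
    _ = 2 * (RCLike.re lam * RCLike.re (star x ⬝ᵥ y)) := by
        rw [RCLike.star_def, RCLike.add_conj, ← RCLike.ofReal_ofNat, ← RCLike.ofReal_mul,
          RCLike.re_ofReal_mul, mul_assoc]
    _ ≤ 0 := by linarith

theorem hamiltonian_possemidef_imaginary_eigen_general (hG : G.PosSemidef) (hK : K.PosSemidef)
    (hlam : RCLike.re lam * RCLike.re (star x ⬝ᵥ y) ≤ 0)
    (h : fromBlocks A G K (-Aᴴ) *ᵥ Sum.elim x y = lam • Sum.elim x y) :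
    A *ᵥ x = lam • x ∧ Aᴴ *ᵥ y = (-lam) • y := by
  obtain ⟨hKx, hGy⟩ := mulVec_eq_zero_of_hamiltonian_eigen hG hK hlam h
  obtain ⟨hx, hy⟩ := (fromBlocks_mulVec_sumElim_eq_smul_iff ..).1 h
  rw [hGy, add_zero] at hx
  rw [hKx, zero_add, neg_mulVec, neg_eq_iff_eq_neg, ← neg_smul] at hy
  exact ⟨hx, hy⟩

end Semidefinite

theorem hamiltonian_possemidef_imaginary_eigen {n : Type*} [Fintype n] [DecidableEq n]
    (A G K : Matrix n n ℂ) (hG : G.PosSemidef) (hK : K.PosSemidef)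
    (lam : ℂ) (hlam : lam.re = 0) (x y : n → ℂ)
    (h : (Matrix.fromBlocks A G K (-Aᴴ)) *ᵥ (Sum.elim x y) = lam • (Sum.elim x y)) :
    A *ᵥ x = lam • x ∧ Aᴴ *ᵥ y = (-lam) • y :=
  hamiltonian_possemidef_imaginary_eigen_general hG hK (by simp [hlam]) h
end

section
/- Let n, m, p be finite types, A : Matrix n n ℂ, B : Matrix n m ℂ, C : Matrix p n ℂ. Assume (A, B) is stabilizable (for every λ ∈ ℂ with Re λ ≥ 0 and every y : n → ℂ, if Aᴴ *ᵥ y = λ • y and Bᴴ *ᵥ y = 0 then y = 0) and (C, A) is detectable (for every λ ∈ ℂ with Re λ ≥ 0 and every x : n → ℂ, if A *ᵥ x = λ • x and C *ᵥ x = 0 then x = 0). Let G = B * Bᴴ and K = Cᴴ * C. Then the Hamiltonian matrix M = Matrix.fromBlocks A G K (-Aᴴ) has no purely imaginary eigenvalue: for every λ ∈ spectrum ℂ M, Re λ ≠ 0. -/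
/-!
Let `M` be the Hamiltonian matrix and `P` the block matrix with lower left block `1` and all other
blocks `0`. Then `P M + Mᴴ P = diag(Cᴴ C, B Bᴴ) = Nᴴ N` with `N = diag(C, Bᴴ)`. If `v = (x, y)`
satisfies `M v = λ v` with `λ` purely imaginary, then
`‖N v‖² = v* (P M + Mᴴ P) v = (λ + λ̄) v* P v = 0`, that is, `C x = 0` and `Bᴴ y = 0`. The blocks of
`M v = λ v` now decouple into `A x = λ x` and `Aᴴ y = -λ y = λ̄ y`, and one of `x`, `y` is nonzero
if `v` is.
-/

open Matrix

section CommRing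

variable {R n m p : Type*} [CommRing R]

/-- The scalar `lam` is an unobservable mode of the pair `(C, A)`: the Popov–Belevitch–Hautus test
for observability fails at `lam`. By duality, an uncontrollable mode `lam` of `(A, B)` is encoded as
the unobservable mode `star lam` of `(Bᴴ, Aᴴ)`. -/
def IsUnobservableMode [Fintype n] (C : Matrix p n R) (A : Matrix n n R) (lam : R) : Prop :=
  ∃ x ≠ 0, A *ᵥ x = lam • x ∧ C *ᵥ x = 0

theorem not_isUnobservableMode_iff [Fintype n] {C : Matrix p n R} {A : Matrix n n R} {lam : R} :
    ¬ IsUnobservableMode C A lam ↔ ∀ x, A *ᵥ x = lam • x → C *ᵥ x = 0 → x = 0 := by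
  grind [IsUnobservableMode]

variable [StarRing R]

/-- The Hamiltonian matrix of the linear system `(A, B, C)`. In the paper's notation it is
`[[A, G], [K, -Aᴴ]]` with `G = B Bᴴ` and `K = Cᴴ C`. -/
def hamiltonianMatrix [Fintype m] [Fintype p]
    (A : Matrix n n R) (B : Matrix n m R) (C : Matrix p n R) : Matrix (n ⊕ n) (n ⊕ n) R :=
  fromBlocks A (B * Bᴴ) (Cᴴ * C) (-Aᴴ)

variable [Fintype n]

theorem mulVec_eq_zero_of_mul_add_conjTranspose_mul_eq [PartialOrder R] [StarOrderedRing R]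
    [NoZeroDivisors R] [Fintype m] {P M : Matrix n n R} {N : Matrix m n R}
    (hN : P * M + Mᴴ * P = Nᴴ * N) {lam : R} (hlam : star lam = -lam) {v : n → R}
    (hv : M *ᵥ v = lam • v) : N *ᵥ v = 0 := by
  refine dotProduct_star_self_eq_zero.1 ?_
  calc star (N *ᵥ v) ⬝ᵥ N *ᵥ v
      = star v ⬝ᵥ (Nᴴ * N) *ᵥ v := by
        rw [star_mulVec, ← dotProduct_mulVec, mulVec_mulVec]
    _ = star v ⬝ᵥ P *ᵥ (M *ᵥ v) + star (M *ᵥ v) ⬝ᵥ P *ᵥ v := by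
        rw [← hN, add_mulVec, dotProduct_add, star_mulVec, ← dotProduct_mulVec, mulVec_mulVec,
          mulVec_mulVec]
    _ = (lam + star lam) * (star v ⬝ᵥ P *ᵥ v) := by
        rw [hv, mulVec_smul, star_smul, dotProduct_smul, smul_dotProduct, smul_eq_mul,
          smul_eq_mul, add_mul]
    _ = 0 := by rw [hlam, add_neg_cancel, zero_mul]

variable [Fintype m] [Fintype p] {A : Matrix n n R} {B : Matrix n m R} {C : Matrix p n R}

theorem hamiltonianMatrix_mulVec_elim_eq_smul_iff {lam : R} {x y : n → R} :
    hamiltonianMatrix A B C *ᵥ Sum.elim x y = lam • Sum.elim x y ↔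
      A *ᵥ x + B *ᵥ (Bᴴ *ᵥ y) = lam • x ∧ Cᴴ *ᵥ (C *ᵥ x) - Aᴴ *ᵥ y = lam • y := by
  have smul_elim : lam • Sum.elim x y = Sum.elim (lam • x) (lam • y) := by
    ext (i | i) <;> rfl
  rw [smul_elim, hamiltonianMatrix, fromBlocks_mulVec, Sum.elim_eq_iff]
  simp [neg_mulVec, sub_eq_add_neg]

theorem fromBlocks_mul_hamiltonianMatrix_add_conjTranspose_mul [DecidableEq n] (A : Matrix n n R)
    (B : Matrix n m R) (C : Matrix p n R) :
    fromBlocks 0 0 1 0 * hamiltonianMatrix A B C +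
        (hamiltonianMatrix A B C)ᴴ * fromBlocks 0 0 1 0 =
      (fromBlocks C 0 0 Bᴴ)ᴴ * fromBlocks C 0 0 Bᴴ := by
  simp [hamiltonianMatrix, fromBlocks_conjTranspose, fromBlocks_multiply, fromBlocks_add]

variable [PartialOrder R] [StarOrderedRing R] [NoZeroDivisors R]

theorem mulVec_eq_zero_of_hamiltonianMatrix_mulVec_elim {lam : R} (hlam : star lam = -lam)
    {x y : n → R} (h : hamiltonianMatrix A B C *ᵥ Sum.elim x y = lam • Sum.elim x y) :
    C *ᵥ x = 0 ∧ Bᴴ *ᵥ y = 0 := by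
  classical
  have hN := mulVec_eq_zero_of_mul_add_conjTranspose_mul_eq
    (fromBlocks_mul_hamiltonianMatrix_add_conjTranspose_mul A B C) hlam h
  rw [fromBlocks_mulVec, ← Sum.elim_zero_zero, Sum.elim_eq_iff] at hN
  simpa using hN

theorem hamiltonianMatrix_mulVec_elim_eq_smul_iff_of_star_eq_neg {lam : R}
    (hlam : star lam = -lam) {x y : n → R} :
    hamiltonianMatrix A B C *ᵥ Sum.elim x y = lam • Sum.elim x y ↔
      (A *ᵥ x = lam • x ∧ C *ᵥ x = 0) ∧ (Aᴴ *ᵥ y = star lam • y ∧ Bᴴ *ᵥ y = 0) := by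
  constructor
  · intro h
    obtain ⟨hC, hB⟩ := mulVec_eq_zero_of_hamiltonianMatrix_mulVec_elim hlam h
    obtain ⟨hx, hy⟩ := hamiltonianMatrix_mulVec_elim_eq_smul_iff.1 h
    rw [hB, mulVec_zero, add_zero] at hx
    rw [hC, mulVec_zero, zero_sub, neg_eq_iff_eq_neg, ← neg_smul, ← hlam] at hy
    exact ⟨⟨hx, hC⟩, hy, hB⟩
  · rintro ⟨⟨hx, hC⟩, hy, hB⟩
    simp [hamiltonianMatrix_mulVec_elim_eq_smul_iff, hx, hC, hy, hB, hlam]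

end CommRing

section Field

variable {𝕜 n m p : Type*} [Field 𝕜] [Fintype n] [DecidableEq n]

theorem mem_spectrum_iff_exists_mulVec_eq_smul {M : Matrix n n 𝕜} {lam : 𝕜} :
    lam ∈ spectrum 𝕜 M ↔ ∃ v ≠ 0, M *ᵥ v = lam • v := by
  rw [mem_spectrum_iff_isRoot_charpoly, Polynomial.IsRoot, eval_charpoly,
    ← exists_mulVec_eq_zero_iff]
  simp [sub_mulVec, sub_eq_zero, eq_comm]

theorem mem_spectrum_hamiltonianMatrix_iff [StarRing 𝕜] [PartialOrder 𝕜] [StarOrderedRing 𝕜]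
    [Fintype m] [Fintype p] {A : Matrix n n 𝕜} {B : Matrix n m 𝕜} {C : Matrix p n 𝕜} {lam : 𝕜}
    (hlam : star lam = -lam) :
    lam ∈ spectrum 𝕜 (hamiltonianMatrix A B C) ↔
      IsUnobservableMode C A lam ∨ IsUnobservableMode Bᴴ Aᴴ (star lam) := by
  rw [mem_spectrum_iff_exists_mulVec_eq_smul]
  constructor
  · rintro ⟨v, hv, h⟩
    obtain ⟨x, y, rfl⟩ : ∃ x y, Sum.elim x y = v := ⟨_, _, Sum.elim_comp_inl_inr v⟩
    obtain ⟨hx, hy⟩ := (hamiltonianMatrix_mulVec_elim_eq_smul_iff_of_star_eq_neg hlam).1 h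
    by_cases hx0 : x = 0
    · have hy0 : y ≠ 0 := by
        rintro rfl
        exact hv (by rw [hx0, Sum.elim_zero_zero])
      exact .inr ⟨y, hy0, hy⟩
    · exact .inl ⟨x, hx0, hx⟩
  · rintro (⟨x, hx0, hx⟩ | ⟨y, hy0, hy⟩)
    · refine ⟨Sum.elim x 0, fun h ↦ hx0 (congrArg (· ∘ Sum.inl) h), ?_⟩
      exact (hamiltonianMatrix_mulVec_elim_eq_smul_iff_of_star_eq_neg hlam).2 ⟨hx, by simp⟩
    · refine ⟨Sum.elim 0 y, fun h ↦ hy0 (congrArg (· ∘ Sum.inr) h), ?_⟩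
      exact (hamiltonianMatrix_mulVec_elim_eq_smul_iff_of_star_eq_neg hlam).2 ⟨by simp, hy⟩

end Field

theorem star_eq_neg_iff_re_eq_zero {𝕜 : Type*} [RCLike 𝕜] {z : 𝕜} :
    star z = -z ↔ RCLike.re z = 0 := by
  rw [eq_neg_iff_add_eq_zero, add_comm, ← starRingEnd_apply, RCLike.add_conj]
  simp

open scoped ComplexOrder in
theorem hamiltonian_no_imaginary_eigen_of_stabilizable_detectable_general
    {𝕜 n m p : Type*} [RCLike 𝕜] [Fintype n] [DecidableEq n] [Fintype m] [Fintype p]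
    (A : Matrix n n 𝕜) (B : Matrix n m 𝕜) (C : Matrix p n 𝕜) :
    (∀ lam ∈ spectrum 𝕜 (hamiltonianMatrix A B C), RCLike.re lam ≠ 0) ↔
      (∀ lam : 𝕜, RCLike.re lam = 0 → ¬ IsUnobservableMode Bᴴ Aᴴ lam) ∧
        ∀ lam : 𝕜, RCLike.re lam = 0 → ¬ IsUnobservableMode C A lam := by
  have re_star {lam : 𝕜} (hre : RCLike.re lam = 0) : RCLike.re (star lam) = 0 := by
    rwa [← starRingEnd_apply, RCLike.conj_re]
  have mem_spectrum_iff {lam : 𝕜} (hre : RCLike.re lam = 0) :=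
    mem_spectrum_hamiltonianMatrix_iff (A := A) (B := B) (C := C)
      (star_eq_neg_iff_re_eq_zero.2 hre)
  refine ⟨fun h ↦ ⟨fun lam hre hB ↦ ?_, fun lam hre hC ↦ ?_⟩, fun ⟨hstab, hdet⟩ lam hlam hre ↦ ?_⟩
  · rw [← star_star lam] at hB
    exact h (star lam) ((mem_spectrum_iff (re_star hre)).2 (.inr hB)) (re_star hre)
  · exact h lam ((mem_spectrum_iff hre).2 (.inl hC)) hre
  · exact ((mem_spectrum_iff hre).1 hlam).elim (hdet lam hre) (hstab (star lam) (re_star hre))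

theorem hamiltonian_no_imaginary_eigen_of_stabilizable_detectable
    {n m p : Type*} [Fintype n] [DecidableEq n] [Fintype m] [Fintype p]
    (A : Matrix n n ℂ) (B : Matrix n m ℂ) (C : Matrix p n ℂ)
    (hstab : ∀ lam : ℂ, 0 ≤ lam.re → ∀ y : n → ℂ,
      Aᴴ *ᵥ y = lam • y → Bᴴ *ᵥ y = 0 → y = 0)
    (hdet : ∀ lam : ℂ, 0 ≤ lam.re → ∀ x : n → ℂ,
      A *ᵥ x = lam • x → C *ᵥ x = 0 → x = 0) :
    ∀ lam ∈ spectrum ℂ (Matrix.fromBlocks A (B * Bᴴ) (Cᴴ * C) (-Aᴴ)), lam.re ≠ 0 :=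
  (hamiltonian_no_imaginary_eigen_of_stabilizable_detectable_general A B C).2
    ⟨fun lam hre ↦ not_isUnobservableMode_iff.2 (hstab lam hre.ge),
      fun lam hre ↦ not_isUnobservableMode_iff.2 (hdet lam hre.ge)⟩
end
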